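/- arXiv:2510.04343 — 4 statements merged into one kernel-verified Lean document; each statement's English description precedes it below -/
import Mathlib

section
/- Let μ > 0 and 0 < d < μ. Then both the maximin value lim_{m→∞} sup_{D ∈ D_m} inf_{P^m ∈ P(μ,d)^m} REV(D,P^m)/m and the minimax value lim_{m→∞} inf_{P^m ∈ P(μ,d)^m} sup_{D ∈ D_m} REV(D,P^m)/m exist and are equal to μ − d/2. -/
/-!
Both values are squeezed between quantities tending to `μ - d / 2`.

*Lower bound.* Selling the grand bundle at price `m (μ - d / 2 - ε)` works against every product
law. Indeed `min(X, μ) = (X + μ - |X - μ|) / 2` has mean `μ - d / 2` and takes values in `[0, μ]`,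
so Chebyshev's inequality for `∑ min(X i, μ) ≤ ∑ X i` bounds the probability of no sale by
`μ² / (m ε²)`, uniformly over the ambiguity set (`measure_sum_ge`).

*Upper bound.* For each `m` there is a law in the ambiguity set against which no truthful
deterministic mechanism earns more than `m (μ - d / 2)` (`exists_worst`): mass `1 - β` at
`l = μ - d / (2 (1 - β))` and mass `β` at a large value. Let `S` be the set of goods sold to the
all-low type `L = (l, …, l)`. Individual rationality at `L` gives `π(L) ≤ l |S|`, and since no type
`v` wants to report `L`, `π(v) ≤ π(L) + ∑_{i ∉ S} v i`. Taking expectations, the revenue is at most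
`l |S| + (m - |S|) (μ - l (1 - β)^m)`. Here `l ≤ μ - d / 2`, and `μ - l (1 - β)^m → d / 2 < μ - d / 2`
as `β → 0`, because `d < μ`. A deterministic allocation is what makes each good either sold or not
sold to `L`.
-/

open MeasureTheory Filter Set
open scoped ENNReal

noncomputable section

/-- The mean-MAD ambiguity set: Borel probability measures on `[0,∞)` (modeled as
probability measures on `ℝ` giving zero mass to `(-∞,0)`) with mean `μ` and
mean absolute deviation `d`. -/
def MeanMAD (μ d : ℝ) : Set (ProbabilityMeasure ℝ) :=
  {P | (P : Measure ℝ) (Set.Iio 0) = 0 ∧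
       Integrable (fun x => x) (P : Measure ℝ) ∧
       (∫ x, x ∂(P : Measure ℝ)) = μ ∧
       (∫ x, |x - μ| ∂(P : Measure ℝ)) = d}

/-- A probability measure whose support consists of exactly two points. -/
def IsTwoPoint (P : ProbabilityMeasure ℝ) : Prop :=
  ∃ x y : ℝ, x ≠ y ∧ (P : Measure ℝ) ({x, y} : Set ℝ)ᶜ = 0 ∧
    (P : Measure ℝ) {x} ≠ 0 ∧ (P : Measure ℝ) {y} ≠ 0

/-- The subset of the mean-MAD ambiguity set consisting of two-point distributions. -/
def MeanMAD2 (μ d : ℝ) : Set (ProbabilityMeasure ℝ) :=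
  {P ∈ MeanMAD μ d | IsTwoPoint P}

/-- A deterministic mechanism for selling `m` goods: a measurable allocation rule with
values in `{0,1}^m` and a measurable nonnegative payment rule. -/
structure Mech (m : ℕ) where
  alloc : (Fin m → ℝ) → (Fin m → ℝ)
  price : (Fin m → ℝ) → ℝ
  alloc_meas : Measurable alloc
  price_meas : Measurable price
  alloc01 : ∀ v i, alloc v i = 0 ∨ alloc v i = 1
  price_nonneg : ∀ v, 0 ≤ price v

/-- Truthfulness: incentive compatibility and individual rationality on `[0,∞)^m`. -/
def Truthful {m : ℕ} (D : Mech m) : Prop :=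
  (∀ v w : Fin m → ℝ, (∀ i, 0 ≤ v i) → (∀ i, 0 ≤ w i) →
    (∑ i, D.alloc w i * v i) - D.price w ≤ (∑ i, D.alloc v i * v i) - D.price v) ∧
  (∀ v : Fin m → ℝ, (∀ i, 0 ≤ v i) → 0 ≤ (∑ i, D.alloc v i * v i) - D.price v)

/-- Expected revenue of a mechanism under a joint distribution of valuations. -/
def REV {m : ℕ} (D : Mech m) (Pm : Measure (Fin m → ℝ)) : ℝ :=
  ∫ v, D.price v ∂Pm

/-- Revenue of the bundling mechanism with price `p`. -/
def BUND {m : ℕ} (p : ℝ) (Pm : Measure (Fin m → ℝ)) : ℝ :=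
  p * (Pm {v | p ≤ ∑ i, v i}).toReal

/-- Optimal deterministic revenue for a known joint distribution. -/
def OPT (m : ℕ) (Pm : Measure (Fin m → ℝ)) : ℝ :=
  sSup {r | ∃ D : Mech m, Truthful D ∧ r = REV D Pm}

/-- The joint (product) measure of a family of independent marginals. -/
def jointMeasure {m : ℕ} (P : Fin m → ProbabilityMeasure ℝ) : Measure (Fin m → ℝ) :=
  Measure.pi (fun i => (P i : Measure ℝ))

/-- Maximin value over deterministic truthful mechanisms. -/
def maximinVal (A : Set (ProbabilityMeasure ℝ)) (m : ℕ) : ℝ :=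
  sSup {r | ∃ D : Mech m, Truthful D ∧
    r = sInf {s | ∃ P : Fin m → ProbabilityMeasure ℝ, (∀ i, P i ∈ A) ∧
      s = REV D (jointMeasure P) / m}}

/-- Minimax value over deterministic truthful mechanisms. -/
def minimaxVal (A : Set (ProbabilityMeasure ℝ)) (m : ℕ) : ℝ :=
  sInf {r | ∃ P : Fin m → ProbabilityMeasure ℝ, (∀ i, P i ∈ A) ∧
    r = sSup {s | ∃ D : Mech m, Truthful D ∧ s = REV D (jointMeasure P) / m}}

/-! ### Generalities on product measures with marginals in the ambiguity set -/

namespace RobustRevenue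

instance {m : ℕ} (P : Fin m → ProbabilityMeasure ℝ) : IsProbabilityMeasure (jointMeasure P) := by
  unfold jointMeasure; infer_instance

variable {m : ℕ} {μ d : ℝ}

lemma ae_nonneg {P : Fin m → ProbabilityMeasure ℝ} (hP : ∀ i, P i ∈ MeanMAD μ d) :
    ∀ᵐ v ∂jointMeasure P, ∀ i, 0 ≤ v i := by
  rw [ae_all_iff]
  intro i
  have h : ∀ᵐ x ∂(P i : Measure ℝ), 0 ≤ x := by
    rw [ae_iff]
    simpa [Set.Iio] using (hP i).1
  exact (Measure.tendsto_eval_ae_ae (μ := fun i => (P i : Measure ℝ)) (i := i)).eventually h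

lemma integrable_eval {P : Fin m → ProbabilityMeasure ℝ} (hP : ∀ i, P i ∈ MeanMAD μ d)
    (i : Fin m) : Integrable (fun v : Fin m → ℝ => v i) (jointMeasure P) :=
  integrable_comp_eval (μ := fun i => (P i : Measure ℝ)) (f := fun x : ℝ => x) (hP i).2.1

lemma integral_eval {P : Fin m → ProbabilityMeasure ℝ} (hP : ∀ i, P i ∈ MeanMAD μ d)
    (i : Fin m) : ∫ v, v i ∂jointMeasure P = μ :=
  (integral_comp_eval (μ := fun i => (P i : Measure ℝ)) (f := fun x : ℝ => x)
    (hP i).2.1.aestronglyMeasurable).trans (hP i).2.2.1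

lemma REV_nonneg (D : Mech m) (Pm : Measure (Fin m → ℝ)) : 0 ≤ REV D Pm :=
  integral_nonneg D.price_nonneg

lemma price_le_sum {D : Mech m} (hD : Truthful D) {v : Fin m → ℝ} (hv : ∀ i, 0 ≤ v i) :
    D.price v ≤ ∑ i, v i := by
  have h := hD.2 v hv
  have h2 : ∑ i, D.alloc v i * v i ≤ ∑ i, v i := by
    refine Finset.sum_le_sum fun i _ => ?_
    rcases D.alloc01 v i with h | h <;> simp [h, hv i]
  linarith

lemma integrable_price {D : Mech m} (hD : Truthful D) {P : Fin m → ProbabilityMeasure ℝ}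
    (hP : ∀ i, P i ∈ MeanMAD μ d) : Integrable D.price (jointMeasure P) := by
  refine (integrable_finsetSum Finset.univ fun i _ => integrable_eval hP i).mono'
    D.price_meas.aestronglyMeasurable ?_
  filter_upwards [ae_nonneg hP] with v hv
  rw [Real.norm_of_nonneg (D.price_nonneg v)]
  exact price_le_sum hD hv

/-- By individual rationality the revenue is at most the full surplus. -/
lemma REV_le {D : Mech m} (hD : Truthful D) {P : Fin m → ProbabilityMeasure ℝ}
    (hP : ∀ i, P i ∈ MeanMAD μ d) : REV D (jointMeasure P) ≤ m * μ := by
  calc REV D (jointMeasure P) ≤ ∫ v, ∑ i, v i ∂jointMeasure P := by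
        refine integral_mono_ae (integrable_price hD hP)
          (integrable_finsetSum Finset.univ fun i _ => integrable_eval hP i) ?_
        filter_upwards [ae_nonneg hP] with v hv using price_le_sum hD hv
    _ = m * μ := by
        rw [integral_finsetSum _ fun i _ => integrable_eval hP i]
        simp [integral_eval hP]

/-! ### Lower bound: the bundling mechanism -/

/-- Sell the grand bundle at the posted price `p`. -/
def bundle (m : ℕ) (p : ℝ) (hp : 0 ≤ p) : Mech m where
  alloc v := if p ≤ ∑ i, v i then 1 else 0
  price v := if p ≤ ∑ i, v i then p else 0
  alloc_meas := Measurable.ite (measurableSet_le (by fun_prop) (by fun_prop))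
    measurable_const measurable_const
  price_meas := Measurable.ite (measurableSet_le (by fun_prop) (by fun_prop))
    measurable_const measurable_const
  alloc01 v i := by split_ifs <;> simp
  price_nonneg v := by split_ifs <;> simp [hp]

lemma bundle_truthful (p : ℝ) (hp : 0 ≤ p) : Truthful (bundle m p hp) := by
  constructor
  · intro v w hv hw
    by_cases h1 : p ≤ ∑ i, v i <;> by_cases h2 : p ≤ ∑ i, w i <;> simp [bundle, h1, h2]
    linarith
  · intro v hv
    by_cases h1 : p ≤ ∑ i, v i
    all_goals simp [bundle, h1]

lemma REV_bundle (p : ℝ) (hp : 0 ≤ p) (Pm : Measure (Fin m → ℝ)) :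
    REV (bundle m p hp) Pm = p * Pm.real {v | p ≤ ∑ i, v i} := by
  have hs : MeasurableSet {v : Fin m → ℝ | p ≤ ∑ i, v i} :=
    measurableSet_le (by fun_prop) (by fun_prop)
  have : (bundle m p hp).price = {v : Fin m → ℝ | p ≤ ∑ i, v i}.indicator fun _ => p := by
    ext v
    simp [bundle, Set.indicator]
  rw [REV, this, integral_indicator_const _ hs, smul_eq_mul, mul_comm]

/-- `min(x, μ) = (x + μ - |x - μ|) / 2`, so truncation at the mean costs exactly half the mean
absolute deviation. -/
lemma integral_min {Q : ProbabilityMeasure ℝ} (hQ : Q ∈ MeanMAD μ d) :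
    ∫ x, min x μ ∂(Q : Measure ℝ) = μ - d / 2 := by
  have hi := hQ.2.1
  have ha : Integrable (fun x => |x - μ|) (Q : Measure ℝ) := (hi.sub (integrable_const μ)).abs
  have : ∀ x : ℝ, min x μ = (x + μ - |x - μ|) / 2 := by
    intro x
    rcases le_total x μ with h | h
    · rw [min_eq_left h, abs_of_nonpos (by linarith)]; ring
    · rw [min_eq_right h, abs_of_nonneg (by linarith)]; ring
  simp_rw [this]
  have hadd : Integrable (fun x => x + μ) (Q : Measure ℝ) := hi.add (integrable_const μ)
  rw [integral_div, integral_sub hadd ha,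
    integral_add hi (integrable_const μ), hQ.2.2.1, hQ.2.2.2]
  simp
  ring

/-- Chebyshev's inequality for the sum of the values truncated at `μ`: these lie in `[0, μ]`
whatever the tails of the marginals, so the bound is uniform over the ambiguity set. -/
lemma measure_sum_ge (hμ : 0 < μ) (hm : 0 < m) {ε : ℝ} (hε : 0 < ε)
    {P : Fin m → ProbabilityMeasure ℝ} (hP : ∀ i, P i ∈ MeanMAD μ d) :
    1 - μ ^ 2 / (m * ε ^ 2) ≤
      (jointMeasure P).real {v | m * (μ - d / 2 - ε) ≤ ∑ i, v i} := by
  have hm' : (0 : ℝ) < m := by exact_mod_cast hm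
  let Y : Fin m → ℝ → ℝ := fun _ x => min x μ
  have hb : ∀ i, ∀ᵐ x ∂(P i : Measure ℝ), Y i x ∈ Set.Icc 0 μ := by
    intro i
    have h : ∀ᵐ x ∂(P i : Measure ℝ), 0 ≤ x := by
      rw [ae_iff]
      simpa [Set.Iio] using (hP i).1
    filter_upwards [h] with x hx using ⟨le_min hx hμ.le, min_le_right _ _⟩
  have hY : Measurable fun x : ℝ => min x μ := by fun_prop
  have hL : ∀ i, MemLp (Y i) 2 (P i : Measure ℝ) := fun i =>
    memLp_of_bounded (hb i) hY.aestronglyMeasurable 2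
  have hL' : MemLp (∑ i, fun v : Fin m → ℝ => Y i (v i)) 2 (jointMeasure P) :=
    memLp_finsetSum' _ fun i _ => (hL i).comp_measurePreserving
      (measurePreserving_eval (fun i => (P i : Measure ℝ)) i)
  have hmean : ∫ v, (∑ i, fun v : Fin m → ℝ => Y i (v i)) v ∂jointMeasure P
      = m * (μ - d / 2) := by
    simp only [Finset.sum_apply]
    rw [integral_finsetSum]
    · have : ∀ i : Fin m, ∫ v, Y i (v i) ∂jointMeasure P = μ - d / 2 := fun i =>
        (integral_comp_eval (μ := fun i => (P i : Measure ℝ)) (f := Y i)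
          hY.aestronglyMeasurable).trans (integral_min (hP i))
      simp [this, mul_sub]
    · exact fun i _ => integrable_comp_eval (μ := fun i => (P i : Measure ℝ)) (f := Y i)
        ((hL i).integrable (by norm_num))
  have hvar : ProbabilityTheory.variance (∑ i, fun v : Fin m → ℝ => Y i (v i)) (jointMeasure P)
      ≤ m * μ ^ 2 := by
    unfold jointMeasure
    rw [ProbabilityTheory.variance_sum_pi hL]
    calc _ ≤ ∑ i : Fin m, μ ^ 2 := by
          refine Finset.sum_le_sum fun i _ => ?_
          refine (ProbabilityTheory.variance_le_sq_of_bounded (hb i)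
            hY.aemeasurable).trans ?_
          nlinarith [sq_nonneg μ]
      _ = m * μ ^ 2 := by simp
  have hch := ProbabilityTheory.meas_ge_le_variance_div_sq hL' (c := m * ε) (by positivity)
  rw [hmean] at hch
  have hch2 : (jointMeasure P).real
      {v | m * ε ≤ |(∑ i, fun v : Fin m → ℝ => Y i (v i)) v - m * (μ - d / 2)|}
      ≤ μ ^ 2 / (m * ε ^ 2) := by
    refine (ENNReal.toReal_le_of_le_ofReal ?_ hch).trans ?_
    · exact div_nonneg (ProbabilityTheory.variance_nonneg _ _) (sq_nonneg _)
    · refine (div_le_div_of_nonneg_right hvar (sq_nonneg _)).trans (le_of_eq ?_)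
      field_simp
  have hs : MeasurableSet {v : Fin m → ℝ | m * (μ - d / 2 - ε) ≤ ∑ i, v i} :=
    measurableSet_le (by fun_prop) (by fun_prop)
  have hsub : (jointMeasure P).real {v | m * (μ - d / 2 - ε) ≤ ∑ i, v i}ᶜ ≤
      (jointMeasure P).real
      {v | m * ε ≤ |(∑ i, fun v : Fin m → ℝ => Y i (v i)) v - m * (μ - d / 2)|} := by
    refine measureReal_mono fun v hv => ?_
    simp only [Set.mem_compl_iff, Set.mem_ofPred_eq, not_le, Finset.sum_apply] at hv ⊢
    have h1 : ∑ i, Y i (v i) ≤ ∑ i, v i := Finset.sum_le_sum fun i _ => min_le_left _ _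
    rw [abs_sub_comm]
    refine le_trans ?_ (le_abs_self _)
    linarith
  rw [measureReal_compl hs, probReal_univ] at hsub
  linarith

/-! ### Upper bound: a distribution with a rare large value -/

/-- The two-point law with mass `1 - β` at `μ - d / (2 (1 - β))` and mass `β` at
`μ + d / (2 β)`. Only its atom at the low point matters afterwards. -/
lemma exists_atom (hμ : 0 < μ) (hd0 : 0 < d) {β : ℝ} (hβ0 : 0 < β) (hβ1 : β < 1)
    (hl : 0 ≤ μ - d / (2 * (1 - β))) :
    ∃ Q ∈ MeanMAD μ d, (Q : Measure ℝ).real {μ - d / (2 * (1 - β))} = 1 - β := by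
  set l := μ - d / (2 * (1 - β)) with hldef
  set h := μ + d / (2 * β) with hhdef
  have h1β : 0 < 1 - β := by linarith
  have hlμ : l < μ := by
    have : 0 < d / (2 * (1 - β)) := by positivity
    linarith
  have hhμ : μ < h := by
    have : 0 < d / (2 * β) := by positivity
    linarith
  let ν : Measure ℝ := ENNReal.ofReal (1 - β) • Measure.dirac l + ENNReal.ofReal β • Measure.dirac h
  have hν : IsProbabilityMeasure ν := ⟨by
    simp only [ν, Measure.add_apply, Measure.smul_apply, measure_univ, smul_eq_mul, mul_one]
    rw [← ENNReal.ofReal_add h1β.le hβ0.le]; simp⟩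
  have hint : ∀ f : ℝ → ℝ, Integrable f ν := fun f =>
    ((integrable_dirac (by simp)).smul_measure ENNReal.ofReal_ne_top).add_measure
      ((integrable_dirac (by simp)).smul_measure ENNReal.ofReal_ne_top)
  have hval : ∀ f : ℝ → ℝ, ∫ x, f x ∂ν = (1 - β) * f l + β * f h := fun f => by
    simp only [ν]
    rw [integral_add_measure
      ((integrable_dirac (by simp)).smul_measure ENNReal.ofReal_ne_top)
      ((integrable_dirac (by simp)).smul_measure ENNReal.ofReal_ne_top)]
    simp [integral_smul_measure, ENNReal.toReal_ofReal, h1β.le, hβ0.le]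
  refine ⟨⟨ν, hν⟩, ⟨?_, hint _, ?_, ?_⟩, ?_⟩
  · change ν (Set.Iio 0) = 0
    have h2 : ¬ h < 0 := by linarith
    simp [ν, hl, h2]
  · change ∫ x, x ∂ν = μ
    rw [hval fun x => x, hldef, hhdef]
    field_simp
    ring
  · change ∫ x, |x - μ| ∂ν = d
    rw [hval fun x => |x - μ|, abs_of_neg (by linarith), abs_of_pos (by linarith), hldef, hhdef]
    field_simp
    ring
  · change ν.real {l} = 1 - β
    have : h ≠ l := by linarith
    simp [ν, measureReal_def, this, h1β.le]

/-- If `S` is the set of goods sold to the buyer of type `(l, …, l)`, then individual rationality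
at that type and incentive compatibility towards it give
`π(v) ≤ l |S| + ∑_{i ∉ S} (v i - l · 1[v = (l, …, l)])`. Here `S` enters through its `0`/`1`-valued
indicator `D.alloc (fun _ => l)`. -/
lemma price_le_aux {D : Mech m} (hD : Truthful D) {l : ℝ} (hl : 0 ≤ l) {v : Fin m → ℝ}
    (hv : ∀ i, 0 ≤ v i) :
    D.price v ≤ ∑ i, (D.alloc (fun _ => l) i * l + (1 - D.alloc (fun _ => l) i) *
      (v i - l * ({fun _ => l} : Set (Fin m → ℝ)).indicator 1 v)) := by
  set L : Fin m → ℝ := fun _ => l with hLdef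
  have hIR := hD.2 L fun _ => hl
  by_cases hvL : v = L
  · subst hvL
    simpa [hLdef] using hIR
  · have hIC := hD.1 v L hv fun _ => hl
    simp only [Set.indicator_of_notMem (show v ∉ ({L} : Set _) from hvL), mul_zero, sub_zero]
    have h2 : ∑ i, D.alloc v i * v i ≤ ∑ i, v i := by
      refine Finset.sum_le_sum fun i _ => ?_
      rcases D.alloc01 v i with h | h <;> simp [h, hv i]
    have h3 : ∑ i, (D.alloc L i * l + (1 - D.alloc L i) * v i) =
        ∑ i, D.alloc L i * L i + ∑ i, v i - ∑ i, D.alloc L i * v i := by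
      rw [← Finset.sum_add_distrib, ← Finset.sum_sub_distrib]
      exact Finset.sum_congr rfl fun i _ => by simp [hLdef]; ring
    rw [h3]
    linarith

/-- Each good sold to the all-low type earns at most `l`; each other good earns at most its
surplus away from the all-low type, `μ - l · P(v = (l, …, l))`. -/
lemma REV_le_of_atom {Q : ProbabilityMeasure ℝ} (hQ : Q ∈ MeanMAD μ d) {l q B : ℝ} (hl : 0 ≤ l)
    (hq : (Q : Measure ℝ).real {l} = q) (hB1 : l ≤ B) (hB2 : μ - l * q ^ m ≤ B)
    {D : Mech m} (hD : Truthful D) :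
    REV D (jointMeasure fun _ => Q) ≤ m * B := by
  have hP : ∀ i : Fin m, (fun _ => Q) i ∈ MeanMAD μ d := fun _ => hQ
  set Pm := jointMeasure fun _ : Fin m => Q with hPm
  set L : Fin m → ℝ := fun _ => l with hLdef
  have hmL : Pm.real {L} = q ^ m := by
    rw [measureReal_def, hPm]
    unfold jointMeasure
    rw [Measure.pi_singleton, ENNReal.toReal_prod]
    simp [hLdef, ← hq, measureReal_def]
  have hind : Integrable (({L} : Set (Fin m → ℝ)).indicator (1 : (Fin m → ℝ) → ℝ)) Pm :=
    (integrable_const (1 : ℝ)).indicator (measurableSet_singleton L)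
  have hterm : ∀ i, Integrable (fun v : Fin m → ℝ => D.alloc L i * l + (1 - D.alloc L i) *
      (v i - l * ({L} : Set (Fin m → ℝ)).indicator 1 v)) Pm := fun i =>
    (integrable_const _).add
      (((integrable_eval hP i).sub (hind.const_mul l)).const_mul _)
  have hval : ∀ i, ∫ v, (D.alloc L i * l + (1 - D.alloc L i) *
      (v i - l * ({L} : Set (Fin m → ℝ)).indicator 1 v)) ∂Pm =
      D.alloc L i * l + (1 - D.alloc L i) * (μ - l * q ^ m) := by
    intro i
    have hsub : Integrable (fun v : Fin m → ℝ =>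
        v i - l * ({L} : Set (Fin m → ℝ)).indicator 1 v) Pm :=
      (integrable_eval hP i).sub (hind.const_mul l)
    have hev : Integrable (fun v : Fin m → ℝ => v i) Pm := integrable_eval hP i
    have hev' : ∫ v, v i ∂Pm = μ := integral_eval hP i
    rw [integral_add (integrable_const _) (hsub.const_mul _), integral_const, probReal_univ,
      one_smul, integral_const_mul, integral_sub hev (hind.const_mul l), integral_const_mul,
      integral_indicator_one (measurableSet_singleton L), hmL, hev']
  calc REV D Pm ≤ ∫ v, ∑ i, (D.alloc L i * l + (1 - D.alloc L i) *
        (v i - l * ({L} : Set (Fin m → ℝ)).indicator 1 v)) ∂Pm := by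
        refine integral_mono_ae (integrable_price hD hP)
          (integrable_finsetSum _ fun i _ => hterm i) ?_
        filter_upwards [ae_nonneg hP] with v hv using price_le_aux hD hl hv
    _ = ∑ i, (D.alloc L i * l + (1 - D.alloc L i) * (μ - l * q ^ m)) := by
        rw [integral_finsetSum _ fun i _ => hterm i]
        exact Finset.sum_congr rfl fun i _ => hval i
    _ ≤ ∑ i : Fin m, B := by
        refine Finset.sum_le_sum fun i _ => ?_
        rcases D.alloc01 L i with h | h <;> simp [h, hB1, hB2]
    _ = m * B := by simp

/-- For a fixed number of goods and `β` small enough, the two-point law caps every truthful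
deterministic mechanism at `μ - d / 2` per good: as `β → 0` the earnings of a good not sold to the
all-low type tend to `d / 2`, which is strictly below `μ - d / 2`. -/
lemma exists_worst (hμ : 0 < μ) (hd0 : 0 < d) (hdμ : d < μ) (m : ℕ) :
    ∃ Q ∈ MeanMAD μ d, ∀ D : Mech m, Truthful D →
      REV D (jointMeasure fun _ => Q) ≤ m * (μ - d / 2) := by
  have hcont : ContinuousAt
      (fun β : ℝ => μ - (μ - d / (2 * (1 - β))) * (1 - β) ^ m) 0 := by
    have : (2 * (1 - (0 : ℝ))) ≠ 0 := by norm_num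
    fun_prop (disch := assumption)
  have hcont2 : ContinuousAt (fun β : ℝ => μ - d / (2 * (1 - β))) 0 := by
    have : (2 * (1 - (0 : ℝ))) ≠ 0 := by norm_num
    fun_prop (disch := assumption)
  have e1 := hcont.eventually_lt (continuousAt_const (y := μ - d / 2))
    (by norm_num; linarith)
  have e2 := (continuousAt_const (y := (0 : ℝ))).eventually_lt hcont2
    (by norm_num; linarith)
  have e3 : ∀ᶠ β : ℝ in nhds 0, β < 1 := eventually_lt_nhds one_pos
  have e : ∀ᶠ β : ℝ in nhdsWithin 0 (Set.Ioi 0), 0 < β ∧ β < 1 ∧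
      0 < μ - d / (2 * (1 - β)) ∧ μ - (μ - d / (2 * (1 - β))) * (1 - β) ^ m < μ - d / 2 := by
    filter_upwards [self_mem_nhdsWithin, nhdsWithin_le_nhds e1, nhdsWithin_le_nhds e2,
      nhdsWithin_le_nhds e3] with β h0 h1 h2 h3 using ⟨h0, h3, h2, h1⟩
  obtain ⟨β, hβ0, hβ1, hl, hlt⟩ := e.exists
  obtain ⟨Q, hQ, hatom⟩ := exists_atom hμ hd0 hβ0 hβ1 hl.le
  refine ⟨Q, hQ, fun D hD => REV_le_of_atom hQ hl.le hatom ?_ hlt.le hD⟩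
  have : d / 2 ≤ d / (2 * (1 - β)) :=
    div_le_div_of_nonneg_left hd0.le (by linarith) (by linarith)
  linarith

/-! ### The two values for a fixed number of goods -/

lemma maximinVal_le (hμ : 0 < μ) (hd0 : 0 < d) (hdμ : d < μ) (hm : 0 < m) :
    maximinVal (MeanMAD μ d) m ≤ μ - d / 2 ∧
    BddAbove {r | ∃ D : Mech m, Truthful D ∧
      r = sInf {s | ∃ P : Fin m → ProbabilityMeasure ℝ, (∀ i, P i ∈ MeanMAD μ d) ∧
        s = REV D (jointMeasure P) / m}} := by
  have hm' : (0 : ℝ) < m := by exact_mod_cast hm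
  obtain ⟨Q, hQ, hle⟩ := exists_worst hμ hd0 hdμ m
  have key : ∀ r ∈ {r | ∃ D : Mech m, Truthful D ∧
      r = sInf {s | ∃ P : Fin m → ProbabilityMeasure ℝ, (∀ i, P i ∈ MeanMAD μ d) ∧
        s = REV D (jointMeasure P) / m}}, r ≤ μ - d / 2 := by
    rintro r ⟨D, hD, rfl⟩
    refine le_trans (csInf_le ⟨0, ?_⟩ ⟨fun _ => Q, fun _ => hQ, rfl⟩) ?_
    · rintro s ⟨P, -, rfl⟩
      exact div_nonneg (REV_nonneg _ _) hm'.le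
    · rw [div_le_iff₀ hm', mul_comm]
      exact hle D hD
  exact ⟨csSup_le ⟨_, bundle m 0 le_rfl, bundle_truthful 0 le_rfl, rfl⟩ key, ⟨_, key⟩⟩

lemma minimaxVal_le (hμ : 0 < μ) (hd0 : 0 < d) (hdμ : d < μ) (hm : 0 < m) :
    minimaxVal (MeanMAD μ d) m ≤ μ - d / 2 := by
  have hm' : (0 : ℝ) < m := by exact_mod_cast hm
  obtain ⟨Q, hQ, hle⟩ := exists_worst hμ hd0 hdμ m
  unfold minimaxVal
  refine le_trans (csInf_le ⟨0, ?_⟩ ⟨fun _ => Q, fun _ => hQ, rfl⟩) ?_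
  · rintro s ⟨P, -, rfl⟩
    refine Real.sSup_nonneg ?_
    rintro s ⟨D, -, rfl⟩
    exact div_nonneg (REV_nonneg _ _) hm'.le
  · refine csSup_le ⟨_, bundle m 0 le_rfl, bundle_truthful 0 le_rfl, rfl⟩ ?_
    rintro s ⟨D, hD, rfl⟩
    rw [div_le_iff₀ hm', mul_comm]
    exact hle D hD

/-- A single mechanism that is good against every product law bounds both values from below. -/
lemma le_both (hμ : 0 < μ) (hd0 : 0 < d) (hdμ : d < μ) (hm : 0 < m) {D : Mech m}
    (hD : Truthful D) {b : ℝ}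
    (hb : ∀ P : Fin m → ProbabilityMeasure ℝ, (∀ i, P i ∈ MeanMAD μ d) →
      b ≤ REV D (jointMeasure P) / m) :
    b ≤ maximinVal (MeanMAD μ d) m ∧ b ≤ minimaxVal (MeanMAD μ d) m := by
  have hm' : (0 : ℝ) < m := by exact_mod_cast hm
  obtain ⟨Q, hQ, -⟩ := exists_worst hμ hd0 hdμ m
  constructor
  · refine le_trans ?_ (le_csSup (maximinVal_le hμ hd0 hdμ hm).2 ⟨D, hD, rfl⟩)
    refine le_csInf ⟨_, fun _ => Q, fun _ => hQ, rfl⟩ ?_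
    rintro s ⟨P, hP, rfl⟩
    exact hb P hP
  · refine le_csInf ⟨_, fun _ => Q, fun _ => hQ, rfl⟩ ?_
    rintro s ⟨P, hP, rfl⟩
    refine (hb P hP).trans (le_csSup ⟨μ, ?_⟩ ⟨D, hD, rfl⟩)
    rintro s ⟨D', hD', rfl⟩
    rw [div_le_iff₀ hm', mul_comm]
    exact REV_le hD' hP

lemma lower_bound (hμ : 0 < μ) (hd0 : 0 < d) (hdμ : d < μ) (hm : 0 < m) {c : ℝ}
    (hc0 : 0 ≤ c) (hc : c < μ - d / 2) :
    c * (1 - μ ^ 2 / (m * (μ - d / 2 - c) ^ 2)) ≤ maximinVal (MeanMAD μ d) m ∧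
    c * (1 - μ ^ 2 / (m * (μ - d / 2 - c) ^ 2)) ≤ minimaxVal (MeanMAD μ d) m := by
  have hm' : (0 : ℝ) < m := by exact_mod_cast hm
  refine le_both hμ hd0 hdμ hm (bundle_truthful (m * c) (by positivity)) fun P hP => ?_
  have h := measure_sum_ge hμ hm (sub_pos.2 hc) hP
  rw [sub_sub_cancel] at h
  rw [REV_bundle, le_div_iff₀ hm']
  nlinarith [mul_le_mul_of_nonneg_left h (mul_nonneg hm'.le hc0)]

lemma eventually_gt (hμ : 0 < μ) (hd0 : 0 < d) (hdμ : d < μ) {a : ℝ} (ha : a < μ - d / 2) :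
    ∀ᶠ m : ℕ in atTop, a < maximinVal (MeanMAD μ d) m ∧ a < minimaxVal (MeanMAD μ d) m := by
  -- any `c` with `max a 0 < c < μ - d / 2` serves as the price per good
  obtain ⟨c, hc1, hc2⟩ := exists_between (show max a 0 < μ - d / 2 from max_lt ha (by linarith))
  have hac : a < c := (le_max_left _ _).trans_lt hc1
  have hc0 : 0 < c := (le_max_right _ _).trans_lt hc1
  have hlim : Tendsto (fun m : ℕ => c * (1 - μ ^ 2 / (m * (μ - d / 2 - c) ^ 2))) atTop
      (nhds c) := by
    have h1 : Tendsto (fun m : ℕ => μ ^ 2 / ((m : ℝ) * (μ - d / 2 - c) ^ 2)) atTop (nhds 0) :=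
      tendsto_const_nhds.div_atTop
        (tendsto_natCast_atTop_atTop.atTop_mul_const (pow_pos (sub_pos.2 hc2) 2))
    simpa using (h1.const_sub 1).const_mul c
  filter_upwards [hlim.eventually_const_lt hac, eventually_gt_atTop 0] with m h1 hm
  have h := lower_bound hμ hd0 hdμ hm hc0.le hc2
  exact ⟨h1.trans_le h.1, h1.trans_le h.2⟩

end RobustRevenue

/-- Theorem 1 (van Eck–Kleer–van Leeuwaarden): for `0 < d < μ`, the (normalized) maximin
and minimax robust revenue values under mean-MAD ambiguity both converge to `μ - d/2`. -/
theorem maximin_minimax_tendsto (μ d : ℝ) (hμ : 0 < μ) (hd0 : 0 < d) (hdμ : d < μ) :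
    Tendsto (fun m : ℕ => maximinVal (MeanMAD μ d) m) atTop (nhds (μ - d / 2)) ∧
    Tendsto (fun m : ℕ => minimaxVal (MeanMAD μ d) m) atTop (nhds (μ - d / 2)) := by
  constructor
  · refine tendsto_order.2 ⟨fun a ha => ?_, fun a ha => ?_⟩
    · exact (RobustRevenue.eventually_gt hμ hd0 hdμ ha).mono fun m h => h.1
    · filter_upwards [eventually_gt_atTop 0] with m hm
      exact (RobustRevenue.maximinVal_le hμ hd0 hdμ hm).1.trans_lt ha
  · refine tendsto_order.2 ⟨fun a ha => ?_, fun a ha => ?_⟩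
    · exact (RobustRevenue.eventually_gt hμ hd0 hdμ ha).mono fun m h => h.2
    · filter_upwards [eventually_gt_atTop 0] with m hm
      exact (RobustRevenue.minimaxVal_le hμ hd0 hdμ hm).trans_lt ha

end
end

section
/- Let μ > 0 and 0 < d < μ. Then both lim_{m→∞} sup_{D ∈ D_m} inf_{P^m ∈ P₂(μ,d)^m} REV(D,P^m)/m and lim_{m→∞} inf_{P^m ∈ P₂(μ,d)^m} sup_{D ∈ D_m} REV(D,P^m)/m exist and are equal to μ − d/2, where the ambiguity set is restricted to two-point distributions. -/
/-!
Write `L = μ - d / 2`; both values are squeezed to `L`.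

*Lower bound.* The bundle of all goods is sold at price `m (L - δ)`. The truncated values
`min (v i) μ` are independent, lie in `[0, μ]`, and have mean exactly `L`, whatever the marginals
in the ambiguity set. Chebyshev's inequality (`measure_sum_lt_le`) shows that the bundle is bought
with probability tending to `1`, uniformly over the ambiguity set (`exists_good`).

*Upper bound.* For fixed `m`, all marginals are taken equal to the two-point law with mass `e` on
the high value `y = μ + d / (2 e)` and mass `1 - e` on the low value `x = μ - d / (2 (1 - e))`.
Incentive compatibility of each report against the all-low report, with individual rationality at
the latter, bounds the payment by an affine function of the values (`price_le_affine`). Its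
expectation is at most `k L + (m - k) d / 2` plus a term vanishing with `e`, where `k` is the number
of goods sold at the all-low profile. As `d < μ` gives `d / 2 < L`, this is at most `m L` in the
limit `e → 0` (`exists_hard`).

The estimate `0 ≤ REV / m ≤ μ` (`REV_div_le`) supplies the boundedness needed for the suprema and
infima over real sets to be genuine.
-/

open MeasureTheory Filter Set
open scoped ENNReal

noncomputable section

/-! ### Expectations under the joint measure -/

section Expectations

variable {μ d : ℝ} {m : ℕ} {P : Fin m → ProbabilityMeasure ℝ}

instance (P : Fin m → ProbabilityMeasure ℝ) : IsProbabilityMeasure (jointMeasure P) := by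
  unfold jointMeasure; infer_instance

lemma ae_joint {q : ℝ → Prop} (h : ∀ i, ∀ᵐ x ∂(P i : Measure ℝ), q x) :
    ∀ᵐ v ∂(jointMeasure P), ∀ i, q (v i) :=
  eventually_all.2 fun i =>
    (Measure.tendsto_eval_ae_ae (μ := fun i => (P i : Measure ℝ)) (i := i)).eventually (h i)

lemma ae_nonneg_of_mem {Q : ProbabilityMeasure ℝ} (h : Q ∈ MeanMAD2 μ d) :
    ∀ᵐ x ∂(Q : Measure ℝ), 0 ≤ x := by
  rw [ae_iff]
  convert h.1.1 using 2
  ext x; simp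

lemma integrable_coord (hP : ∀ i, P i ∈ MeanMAD2 μ d) (i : Fin m) :
    Integrable (fun v => v i) (jointMeasure P) :=
  integrable_comp_eval (μ := fun i => (P i : Measure ℝ)) (f := fun x => x) (hP i).1.2.1

lemma integral_coord (hP : ∀ i, P i ∈ MeanMAD2 μ d) (i : Fin m) :
    ∫ v, v i ∂(jointMeasure P) = μ :=
  (integral_comp_eval (μ := fun i => (P i : Measure ℝ)) (f := fun x => x)
    (hP i).1.2.1.aestronglyMeasurable).trans (hP i).1.2.2.1

/-- Truncating at the mean removes exactly half of the mean absolute deviation, because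
`min x μ = (x + μ - |x - μ|) / 2`. -/
lemma integral_min_mean {Q : ProbabilityMeasure ℝ} (h : Q ∈ MeanMAD2 μ d) :
    ∫ x, min x μ ∂(Q : Measure ℝ) = μ - d / 2 := by
  obtain ⟨⟨-, hi, hm, ha⟩, -⟩ := h
  have h1 : ∀ x : ℝ, min x μ = (x + μ - |x - μ|) / 2 := by
    intro x
    rcases le_total x μ with h | h
    · rw [min_eq_left h, abs_of_nonpos (by linarith)]; ring
    · rw [min_eq_right h, abs_of_nonneg (by linarith)]; ring
  simp_rw [h1]
  have i1 : Integrable (fun x => x + μ) (Q : Measure ℝ) := hi.add (integrable_const μ)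
  have i2 : Integrable (fun x => |x - μ|) (Q : Measure ℝ) := (hi.sub (integrable_const μ)).abs
  rw [integral_div, integral_sub i1 i2, integral_add hi (integrable_const μ), hm, ha]
  simp
  ring

end Expectations

/-! ### Revenue bounds valid for every truthful mechanism -/

lemma REV_nonneg {m : ℕ} (D : Mech m) (Q : Measure (Fin m → ℝ)) : 0 ≤ REV D Q :=
  integral_nonneg D.price_nonneg

lemma alloc_nonneg {m : ℕ} (D : Mech m) (v : Fin m → ℝ) (i : Fin m) : 0 ≤ D.alloc v i := by
  rcases D.alloc01 v i with h | h <;> simp [h]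

lemma alloc_le_one {m : ℕ} (D : Mech m) (v : Fin m → ℝ) (i : Fin m) : D.alloc v i ≤ 1 := by
  rcases D.alloc01 v i with h | h <;> simp [h]

lemma REV_div_le {μ d : ℝ} {m : ℕ} (hm : 0 < m) {P : Fin m → ProbabilityMeasure ℝ}
    (hP : ∀ i, P i ∈ MeanMAD2 μ d) {D : Mech m} (hD : Truthful D) :
    REV D (jointMeasure P) / m ≤ μ := by
  have hm' : (0 : ℝ) < m := by exact_mod_cast hm
  rw [div_le_iff₀ hm']
  have h : REV D (jointMeasure P) ≤ ∫ v, ∑ i, v i ∂(jointMeasure P) := by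
    refine integral_mono_of_nonneg (ae_of_all _ D.price_nonneg)
      (integrable_finsetSum _ fun i _ => integrable_coord hP i) ?_
    filter_upwards [ae_joint fun i => ae_nonneg_of_mem (hP i)] with v hv
    have h1 := hD.2 v hv
    have h2 : ∑ i, D.alloc v i * v i ≤ ∑ i, v i :=
      Finset.sum_le_sum fun i _ => mul_le_of_le_one_left (hv i) (alloc_le_one D v i)
    show D.price v ≤ ∑ i, v i
    linarith
  rw [integral_finsetSum _ fun i _ => integrable_coord hP i] at h
  simp only [integral_coord hP] at h
  simp at h
  linarith

/-- Let every coordinate of `v` be a low value `x` or a high value `y`. Comparing the report `v`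
with the all-low report by incentive compatibility, and using individual rationality at the
all-low report, bounds the payment at `v` by an affine function of `v`: each coordinate
`(v i - x) / (y - x)` is the indicator that good `i` is high. -/
lemma price_le_affine {m : ℕ} {D : Mech m} (hD : Truthful D) {x y : ℝ} (hx : 0 ≤ x) (hxy : x < y)
    {v : Fin m → ℝ} (hv : ∀ i, v i = x ∨ v i = y) :
    D.price v ≤ (∑ i, D.alloc (fun _ => x) i * x) +
      ∑ i, ((1 - D.alloc (fun _ => x) i) * y + m * x) / (y - x) * (v i - x) := by
  set z := D.alloc (fun _ => x) with hz
  have hz0 : ∀ i, 0 ≤ z i := fun i => alloc_nonneg D _ i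
  have hz1 : ∀ i, z i ≤ 1 := fun i => alloc_le_one D _ i
  have hyx : 0 < y - x := by linarith
  have hIR := hD.2 (fun _ => x) (fun _ => hx)
  have hterm : ∀ i, 0 ≤ ((1 - z i) * y + m * x) / (y - x) * (v i - x) := by
    intro i
    have : 0 ≤ (1 - z i) * y := mul_nonneg (by linarith [hz1 i]) (by linarith)
    have h2 : 0 ≤ v i - x := by rcases hv i with h | h <;> rw [h] <;> linarith
    positivity
  by_cases hall : ∀ i, v i = x
  · have : v = fun _ => x := funext hall
    have h3 := Finset.sum_nonneg fun i (_ : i ∈ Finset.univ) => hterm i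
    rw [this] at h3 ⊢
    linarith
  · push Not at hall
    obtain ⟨j, hj⟩ := hall
    have hjy : v j = y := (hv j).resolve_left hj
    have hv0 : ∀ i, 0 ≤ v i := by
      intro i; rcases hv i with h | h <;> rw [h] <;> linarith
    have hIC := hD.1 v (fun _ => x) hv0 (fun _ => hx)
    have h1 : ∑ i, D.alloc v i * v i ≤ ∑ i, v i :=
      Finset.sum_le_sum fun i _ => mul_le_of_le_one_left (hv0 i) (alloc_le_one D v i)
    have h2 : ∑ i, v i ≤ ∑ i, z i * v i + ∑ i, ((1 - z i) * y / (y - x) * (v i - x) + x) := by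
      rw [← Finset.sum_add_distrib]
      refine Finset.sum_le_sum fun i _ => ?_
      rcases hv i with h | h
      · rw [h]; nlinarith [mul_nonneg (hz0 i) hx]
      · rw [h, div_mul_cancel₀ _ hyx.ne']; linarith
    -- Some good is high, so its indicator pays for the extra `m * x`.
    have h4 : m * x ≤ ∑ i, (m * x) / (y - x) * (v i - x) := by
      have : m * x = (m * x) / (y - x) * (v j - x) := by
        rw [hjy, div_mul_cancel₀ _ hyx.ne']
      refine this.le.trans (Finset.single_le_sum (f := fun i => (m * x) / (y - x) * (v i - x))
        (fun i _ => ?_) (Finset.mem_univ j))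
      have h2 : 0 ≤ v i - x := by rcases hv i with h | h <;> rw [h] <;> linarith
      positivity
    have h5 : ∑ i, ((1 - z i) * y / (y - x) * (v i - x) + x)
        = ∑ i, (1 - z i) * y / (y - x) * (v i - x) + m * x := by
      rw [Finset.sum_add_distrib]; simp
    have h6 : ∑ i, ((1 - z i) * y + m * x) / (y - x) * (v i - x)
        = ∑ i, (1 - z i) * y / (y - x) * (v i - x) + ∑ i, (m * x) / (y - x) * (v i - x) := by
      rw [← Finset.sum_add_distrib]
      exact Finset.sum_congr rfl fun i _ => by ring
    linarith

/-! ### The worst-case two-point distributions -/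

/-- The two-point law with mass `e` at `μ + d / (2 e)` and mass `1 - e` at `μ - d / (2 (1 - e))`
has mean `μ` and mean absolute deviation `d`. -/
lemma exists_twoPoint {μ d e : ℝ} (hd0 : 0 < d) (hdμ : d < μ) (he0 : 0 < e) (he : e ≤ 1 / 2) :
    ∃ Q ∈ MeanMAD2 μ d, ∀ᵐ t ∂(Q : Measure ℝ), t = μ - d / (2 * (1 - e)) ∨ t = μ + d / (2 * e) := by
  set x := μ - d / (2 * (1 - e)) with hx
  set y := μ + d / (2 * e) with hy
  have he1 : 0 < 1 - e := by linarith
  have hxμ : x < μ := by rw [hx]; have : 0 < d / (2 * (1 - e)) := by positivity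
                         linarith
  have hyμ : μ < y := by rw [hy]; have : 0 < d / (2 * e) := by positivity
                         linarith
  have hx0 : 0 ≤ x := by
    rw [hx, sub_nonneg, div_le_iff₀ (by positivity)]; nlinarith
  let M : Measure ℝ := ENNReal.ofReal (1 - e) • Measure.dirac x + ENNReal.ofReal e • Measure.dirac y
  have hM : IsProbabilityMeasure M := ⟨by
    simp only [M, Measure.add_apply, Measure.smul_apply, measure_univ, smul_eq_mul, mul_one]
    rw [← ENNReal.ofReal_add he1.le he0.le]; simp⟩
  have hint : ∀ f : ℝ → ℝ, Integrable f M := fun f =>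
    ((integrable_dirac (by simp)).smul_measure ENNReal.ofReal_ne_top).add_measure
      ((integrable_dirac (by simp)).smul_measure ENNReal.ofReal_ne_top)
  have hval : ∀ f : ℝ → ℝ, ∫ t, f t ∂M = (1 - e) * f x + e * f y := by
    intro f
    rw [integral_add_measure ((integrable_dirac (by simp)).smul_measure ENNReal.ofReal_ne_top)
      ((integrable_dirac (by simp)).smul_measure ENNReal.ofReal_ne_top),
      integral_smul_measure, integral_smul_measure, integral_dirac, integral_dirac,
      ENNReal.toReal_ofReal he1.le, ENNReal.toReal_ofReal he0.le]
    simp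
  have e1 : (1 - e) * (μ - x) = d / 2 := by rw [hx]; field_simp; ring
  have e2 : e * (y - μ) = d / 2 := by rw [hy]; field_simp; ring
  have hcompl : M ({x, y} : Set ℝ)ᶜ = 0 := by simp [M]
  refine ⟨⟨M, hM⟩, ⟨⟨?_, hint _, ?_, ?_⟩, x, y, (hxμ.trans hyμ).ne, hcompl, ?_, ?_⟩, ?_⟩
  · simp [M, hx0, hx0.trans (hxμ.trans hyμ).le]
  · refine (hval _).trans ?_
    linarith
  · refine (hval _).trans ?_
    rw [abs_of_neg (by linarith), abs_of_pos (by linarith)]; linarith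
  · simp [M, show ¬ 1 ≤ e by linarith]
  · simp [M, he0]
  · rw [ae_iff]; exact hcompl

/-- Against rare, very high values, no truthful mechanism earns more than `μ - d / 2` per good up
to `ε`. If the mechanism sells `k` goods at the all-low profile, it earns about
`k (μ - d / 2)` there and at most about `(m - k) d / 2` from high values; here `d / 2 < μ - d / 2`. -/
lemma exists_hard {μ d : ℝ} (hd0 : 0 < d) (hdμ : d < μ) {m : ℕ} (hm : 0 < m)
    {ε : ℝ} (hε : 0 < ε) :
    ∃ P : Fin m → ProbabilityMeasure ℝ, (∀ i, P i ∈ MeanMAD2 μ d) ∧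
      ∀ D : Mech m, Truthful D → REV D (jointMeasure P) / m ≤ μ - d / 2 + ε := by
  have hμ : 0 < μ := hd0.trans hdμ
  have hm' : (0 : ℝ) < m := by exact_mod_cast hm
  set e := min (1 / 2) (ε / (μ * (1 + m))) with he
  have he0 : 0 < e := lt_min (by norm_num) (by positivity)
  have heh : e ≤ 1 / 2 := min_le_left _ _
  have heε : e * (μ * (1 + m)) ≤ ε := by
    rw [← le_div_iff₀ (by positivity)]; exact min_le_right _ _
  obtain ⟨Q, hQ, hQs⟩ := exists_twoPoint hd0 hdμ he0 heh
  set x := μ - d / (2 * (1 - e)) with hx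
  set y := μ + d / (2 * e) with hy
  have he1 : 0 < 1 - e := by linarith
  have e1 : (1 - e) * (μ - x) = d / 2 := by rw [hx]; field_simp; ring
  have e2 : e * (y - μ) = d / 2 := by rw [hy]; field_simp; ring
  have hxL : x ≤ μ - d / 2 := by nlinarith
  have hxμ : x < μ := by linarith
  have hyμ : μ < y := by nlinarith
  have hx0 : 0 ≤ x := by
    rw [hx, sub_nonneg, div_le_iff₀ (by positivity)]; nlinarith
  have hyx : 0 < y - x := by linarith
  have hfrac : (μ - x) / (y - x) = e := by
    rw [div_eq_iff hyx.ne']; linarith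
  have hP : ∀ i : Fin m, (fun _ => Q) i ∈ MeanMAD2 μ d := fun _ => hQ
  refine ⟨fun _ => Q, hP, fun D hD => ?_⟩
  rw [div_le_iff₀ hm']
  set z := D.alloc (fun _ => x) with hz
  have hI : ∀ i : Fin m, Integrable (fun v : Fin m → ℝ =>
      ((1 - z i) * y + m * x) / (y - x) * (v i - x)) (jointMeasure fun _ => Q) := fun i =>
    ((integrable_coord hP i).sub (integrable_const x)).const_mul _
  have h : REV D (jointMeasure fun _ => Q) ≤
      ∫ v, ((∑ i, z i * x) + ∑ i, ((1 - z i) * y + m * x) / (y - x) * (v i - x))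
        ∂(jointMeasure fun _ : Fin m => Q) := by
    refine integral_mono_of_nonneg (ae_of_all _ D.price_nonneg)
      ((integrable_const _).add (integrable_finsetSum _ fun i _ => hI i)) ?_
    filter_upwards [ae_joint (P := fun _ : Fin m => Q) fun _ => hQs] with v hv
    exact price_le_affine hD hx0 (by linarith) hv
  rw [integral_add (integrable_const _) (integrable_finsetSum _ fun i _ => hI i),
    integral_finsetSum _ fun i _ => hI i] at h
  have hEi : ∀ i : Fin m, ∫ v, ((1 - z i) * y + m * x) / (y - x) * (v i - x)
      ∂(jointMeasure fun _ : Fin m => Q) = ((1 - z i) * y + m * x) * e := by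
    intro i
    rw [integral_const_mul, integral_sub (integrable_coord hP i) (integrable_const x),
      integral_coord hP i, ← hfrac]
    simp
    ring
  simp only [hEi, integral_const, probReal_univ, one_smul] at h
  rw [← Finset.sum_add_distrib] at h
  refine h.trans ?_
  have hb : ∀ i : Fin m, z i * x + ((1 - z i) * y + m * x) * e ≤ μ - d / 2 + ε := by
    intro i
    have hye : y * e = d / 2 + μ * e := by linarith
    have a1 : z i * x ≤ z i * (μ - d / 2) := mul_le_mul_of_nonneg_left hxL (alloc_nonneg D _ i)
    have a2 : (1 - z i) * (d / 2) ≤ (1 - z i) * (μ - d / 2) :=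
      mul_le_mul_of_nonneg_left (by linarith) (by linarith [alloc_le_one D (fun _ => x) i])
    have a3 : (1 - z i) * (μ * e) ≤ μ * e :=
      mul_le_of_le_one_left (by positivity) (by linarith [alloc_nonneg D (fun _ => x) i])
    have a4 : m * x * e ≤ m * μ * e := by gcongr
    calc z i * x + ((1 - z i) * y + m * x) * e
        = z i * x + (1 - z i) * (y * e) + m * x * e := by ring
      _ ≤ μ - d / 2 + ε := by rw [hye]; linarith
  calc _ ≤ ∑ i : Fin m, (μ - d / 2 + ε) := Finset.sum_le_sum fun i _ => hb i
    _ = _ := by simp; ring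

/-! ### Bundling -/

/-- The mechanism offering only the grand bundle, at price `p`. -/
def bundle (m : ℕ) (p : ℝ) (hp : 0 ≤ p) : Mech m where
  alloc v _ := if p ≤ ∑ i, v i then 1 else 0
  price v := if p ≤ ∑ i, v i then p else 0
  alloc_meas := measurable_pi_lambda _ fun _ =>
    Measurable.ite (measurableSet_le measurable_const (by fun_prop)) measurable_const
      measurable_const
  price_meas := Measurable.ite (measurableSet_le measurable_const (by fun_prop)) measurable_const
    measurable_const
  alloc01 v i := by by_cases h : p ≤ ∑ i, v i <;> simp [h]
  price_nonneg v := by by_cases h : p ≤ ∑ i, v i <;> simp [h, hp]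

lemma bundle_truthful (m : ℕ) (p : ℝ) (hp : 0 ≤ p) : Truthful (bundle m p hp) := by
  constructor
  · intro v w _ _
    by_cases h : p ≤ ∑ i, v i <;> by_cases h' : p ≤ ∑ i, w i <;> simp [bundle, h, h']; linarith
  · intro v _
    by_cases h : p ≤ ∑ i, v i <;> simp [bundle, h]

/-- Chebyshev's inequality for the truncated values `min (v i) μ`, which are independent, lie in
`[0, μ]` and have mean `μ - d / 2`: the total value is rarely below `m (μ - d / 2 - δ)`. -/
lemma measure_sum_lt_le {μ d δ : ℝ} (hμ : 0 < μ) (hδ : 0 < δ) {m : ℕ} (hm : 0 < m)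
    {P : Fin m → ProbabilityMeasure ℝ} (hP : ∀ i, P i ∈ MeanMAD2 μ d) :
    (jointMeasure P).real {v | ∑ i, v i < m * (μ - d / 2 - δ)} ≤ μ ^ 2 / (4 * δ ^ 2) / m := by
  have hm' : (0 : ℝ) < m := by exact_mod_cast hm
  have hbd : ∀ i, ∀ᵐ x ∂(P i : Measure ℝ), min x μ ∈ Icc 0 μ := fun i => by
    filter_upwards [ae_nonneg_of_mem (hP i)] with x hx
    exact ⟨le_min hx hμ.le, min_le_right _ _⟩
  have hmeas : Measurable fun x : ℝ => min x μ := by fun_prop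
  have hL : ∀ i, MemLp (fun x : ℝ => min x μ) 2 (P i : Measure ℝ) := fun i =>
    memLp_of_bounded (hbd i) hmeas.aestronglyMeasurable 2
  set Y : (Fin m → ℝ) → ℝ := ∑ i, fun v => min (v i) μ with hY
  have hLi : ∀ i : Fin m, MemLp (fun v : Fin m → ℝ => min (v i) μ) 2 (jointMeasure P) := fun i =>
    (hL i).comp_measurePreserving (measurePreserving_eval (fun i => (P i : Measure ℝ)) i)
  have hLY : MemLp Y 2 (jointMeasure P) := memLp_finsetSum' _ fun i _ => hLi i
  have hvar : ProbabilityTheory.variance Y (jointMeasure P) ≤ m * (μ ^ 2 / 4) := by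
    have := ProbabilityTheory.variance_sum_pi (μ := fun i => (P i : Measure ℝ))
      (X := fun _ x => min x μ) hL
    refine this.le.trans ?_
    calc _ ≤ ∑ i : Fin m, ((μ - 0) / 2) ^ 2 := Finset.sum_le_sum fun i _ =>
          ProbabilityTheory.variance_le_sq_of_bounded (hbd i) hmeas.aemeasurable
      _ = _ := by rw [Finset.sum_const, Finset.card_univ, Fintype.card_fin, nsmul_eq_mul]; ring
  have hmean : ∫ v, Y v ∂(jointMeasure P) = m * (μ - d / 2) := by
    simp only [hY, Finset.sum_apply]
    rw [integral_finsetSum _ fun i _ => (hLi i).integrable (by norm_num)]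
    have : ∀ i : Fin m, ∫ v, min (v i) μ ∂(jointMeasure P) = μ - d / 2 := fun i =>
      (integral_comp_eval (μ := fun i => (P i : Measure ℝ)) (f := fun x => min x μ)
        hmeas.aestronglyMeasurable).trans (integral_min_mean (hP i))
    simp only [this, Finset.sum_const, Finset.card_univ, Fintype.card_fin, nsmul_eq_mul]
  have hcheb := ProbabilityTheory.meas_ge_le_variance_div_sq hLY (c := m * δ) (by positivity)
  rw [hmean] at hcheb
  have hsub : {v : Fin m → ℝ | ∑ i, v i < m * (μ - d / 2 - δ)} ⊆
      {v | m * δ ≤ |Y v - m * (μ - d / 2)|} := by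
    intro v hv
    have h1 : Y v ≤ ∑ i, v i := by
      simp only [hY, Finset.sum_apply]
      exact Finset.sum_le_sum fun i _ => min_le_left _ _
    have hv' : ∑ i, v i < m * (μ - d / 2 - δ) := hv
    show m * δ ≤ |Y v - m * (μ - d / 2)|
    rw [abs_sub_comm]
    refine le_trans ?_ (le_abs_self _)
    nlinarith
  have h3 := ENNReal.toReal_mono ENNReal.ofReal_ne_top ((measure_mono hsub).trans hcheb)
  rw [ENNReal.toReal_ofReal (div_nonneg (ProbabilityTheory.variance_nonneg _ _) (sq_nonneg _))] at h3
  refine h3.trans ?_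
  calc _ ≤ m * (μ ^ 2 / 4) / (m * δ) ^ 2 := by gcongr
    _ = _ := by field_simp

lemma exists_good {μ d : ℝ} (hd0 : 0 < d) (hdμ : d < μ) {ε : ℝ} (hε : 0 < ε) :
    ∀ᶠ m : ℕ in atTop, ∃ D : Mech m, Truthful D ∧
      ∀ P : Fin m → ProbabilityMeasure ℝ, (∀ i, P i ∈ MeanMAD2 μ d) →
        μ - d / 2 - ε ≤ REV D (jointMeasure P) / m := by
  have hμ : 0 < μ := hd0.trans hdμ
  set L := μ - d / 2 with hLdef
  have hL : 0 < L := by linarith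
  set δ := min (ε / 2) L with hδdef
  have hδ : 0 < δ := lt_min (by linarith) hL
  have hδε : δ ≤ ε / 2 := min_le_left _ _
  have hδL : δ ≤ L := min_le_right _ _
  set C := μ ^ 2 / (4 * δ ^ 2) with hC
  have hlim : Tendsto (fun m : ℕ => L * (C / (m : ℝ))) atTop (nhds (L * 0)) :=
    (tendsto_const_div_atTop_nhds_zero_nat C).const_mul L
  rw [mul_zero] at hlim
  filter_upwards [hlim.eventually (ge_mem_nhds (show (0 : ℝ) < ε / 2 by linarith)),
    eventually_gt_atTop 0] with m hm1 hm
  have hm' : (0 : ℝ) < m := by exact_mod_cast hm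
  have hp : 0 ≤ m * (L - δ) := mul_nonneg hm'.le (by linarith)
  refine ⟨bundle m _ hp, bundle_truthful m _ hp, fun P hP => ?_⟩
  have hS : MeasurableSet {v : Fin m → ℝ | m * (L - δ) ≤ ∑ i, v i} :=
    measurableSet_le measurable_const (by fun_prop)
  have hrev : REV (bundle m _ hp) (jointMeasure P) =
      (jointMeasure P).real {v | m * (L - δ) ≤ ∑ i, v i} * (m * (L - δ)) := by
    have : (bundle m _ hp).price =
        {v : Fin m → ℝ | m * (L - δ) ≤ ∑ i, v i}.indicator fun _ => m * (L - δ) := by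
      ext v; simp [bundle, Set.indicator_apply]
    rw [REV, this, integral_indicator_const _ hS, smul_eq_mul]
  have hprob : 1 - C / m ≤ (jointMeasure P).real {v | m * (L - δ) ≤ ∑ i, v i} := by
    have h1 := measure_sum_lt_le hμ hδ hm hP
    have h2 := probReal_compl_eq_one_sub (μ := jointMeasure P) hS
    have h3 : {v : Fin m → ℝ | m * (L - δ) ≤ ∑ i, v i}ᶜ = {v | ∑ i, v i < m * (L - δ)} := by
      ext v; simp
    rw [h3] at h2
    rw [← hLdef, h2] at h1
    linarith
  rw [hrev, le_div_iff₀ hm']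
  have hC0 : 0 ≤ C / m := by positivity
  have h5 : L - ε ≤ (1 - C / m) * (L - δ) := by nlinarith [mul_nonneg hC0 hδ.le]
  calc (L - ε) * m ≤ ((1 - C / m) * (L - δ)) * m := by gcongr
    _ = (1 - C / m) * (m * (L - δ)) := by ring
    _ ≤ _ := mul_le_mul_of_nonneg_right hprob hp

/-! ### The two limits -/

/-- Corollary 1: for `0 < d < μ`, the maximin and minimax robust revenue values restricted
to the ambiguity set of two-point distributions both converge to `μ - d/2`. -/
theorem maximin_minimax_tendsto_twoPoint (μ d : ℝ) (hμ : 0 < μ) (hd0 : 0 < d) (hdμ : d < μ) :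
    Tendsto (fun m : ℕ => maximinVal (MeanMAD2 μ d) m) atTop (nhds (μ - d / 2)) ∧
    Tendsto (fun m : ℕ => minimaxVal (MeanMAD2 μ d) m) atTop (nhds (μ - d / 2)) := by
  have hUp : ∀ m : ℕ, 0 < m → ∀ ε > 0,
      maximinVal (MeanMAD2 μ d) m ≤ μ - d / 2 + ε ∧ minimaxVal (MeanMAD2 μ d) m ≤ μ - d / 2 + ε := by
    intro m hm ε hε
    obtain ⟨P, hP, hPD⟩ := exists_hard hd0 hdμ hm hε
    constructor
    · refine csSup_le ⟨_, bundle m 0 le_rfl, bundle_truthful _ _ _, rfl⟩ ?_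
      rintro r ⟨D, hD, rfl⟩
      refine le_trans (csInf_le ⟨0, ?_⟩ ⟨P, hP, rfl⟩) (hPD D hD)
      rintro s ⟨P', -, rfl⟩
      exact div_nonneg (REV_nonneg _ _) (Nat.cast_nonneg _)
    · refine le_trans (csInf_le ⟨0, ?_⟩ ⟨P, hP, rfl⟩) (csSup_le ?_ ?_)
      · rintro r ⟨P', -, rfl⟩
        refine Real.sSup_nonneg ?_
        rintro s ⟨D, -, rfl⟩
        exact div_nonneg (REV_nonneg _ _) (Nat.cast_nonneg _)
      · exact ⟨_, bundle m 0 le_rfl, bundle_truthful _ _ _, rfl⟩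
      · rintro s ⟨D, hD, rfl⟩
        exact hPD D hD
  have hLo : ∀ ε > 0, ∀ᶠ m : ℕ in atTop,
      μ - d / 2 - ε ≤ maximinVal (MeanMAD2 μ d) m ∧ μ - d / 2 - ε ≤ minimaxVal (MeanMAD2 μ d) m := by
    intro ε hε
    filter_upwards [exists_good hd0 hdμ hε, eventually_gt_atTop 0] with m hgood hm
    obtain ⟨D, hD, hDP⟩ := hgood
    obtain ⟨P, hP, -⟩ := exists_hard hd0 hdμ hm hε
    constructor
    · refine le_csSup_of_le ⟨μ, ?_⟩ ⟨D, hD, rfl⟩ (le_csInf ⟨_, P, hP, rfl⟩ ?_)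
      · rintro r ⟨D', hD', rfl⟩
        refine le_trans (csInf_le ⟨0, ?_⟩ ⟨P, hP, rfl⟩) (REV_div_le hm hP hD')
        rintro s ⟨P', -, rfl⟩
        exact div_nonneg (REV_nonneg _ _) (Nat.cast_nonneg _)
      · rintro s ⟨P', hP', rfl⟩
        exact hDP P' hP'
    · refine le_csInf ⟨_, P, hP, rfl⟩ ?_
      rintro r ⟨P', hP', rfl⟩
      refine le_csSup_of_le ⟨μ, ?_⟩ ⟨D, hD, rfl⟩ (hDP P' hP')
      rintro s ⟨D', hD', rfl⟩
      exact REV_div_le hm hP' hD'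
  have key : ∀ f : ℕ → ℝ, (∀ ε > 0, ∀ᶠ m in atTop, μ - d / 2 - ε ≤ f m ∧ f m ≤ μ - d / 2 + ε) →
      Tendsto f atTop (nhds (μ - d / 2)) := by
    intro f hf
    rw [Metric.tendsto_nhds]
    intro ε hε
    filter_upwards [hf (ε / 2) (by linarith)] with m hm
    rw [Real.dist_eq, abs_lt]
    constructor <;> linarith [hm.1, hm.2]
  constructor
  · refine key _ fun ε hε => ?_
    filter_upwards [hLo ε hε, eventually_gt_atTop 0] with m h hm
    exact ⟨h.1, (hUp m hm ε hε).1⟩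
  · refine key _ fun ε hε => ?_
    filter_upwards [hLo ε hε, eventually_gt_atTop 0] with m h hm
    exact ⟨h.2, (hUp m hm ε hε).2⟩

end
end

section
/- Let μ > 0 and 0 < d < 2μ. Then limsup_{m→∞} inf_{P^m ∈ P(μ,d)^m} sup_{D ∈ D_m} REV(D,P^m)/m ≤ max{μ − d/2, d/2}; that is, no deterministic truthful mechanism can asymptotically achieve a normalized revenue greater than max{μ − d/2, d/2} in the minimax problem. -/
/-!
Two-point marginals already force the bound, for every `m ≥ 1`. Take the goods i.i.d., each worth
`H = μ + d / (2q)` with small probability `q` and `L = μ - d / (2(1 - q))` otherwise; this law has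
mean `μ` and mean absolute deviation `d`. Let `b` be the type valuing every good at `L`, and let
`S` be the set of goods a truthful mechanism sells to `b`, for a payment of at most `|S| L`. Any
type `v` could imitate `b`, so `v` pays at most `|S| L + ∑_{i ∉ S} v i` (`price_le`).
Taking expectations, with the better bound `|S| L` on the event `v = b` of probability
`(1 - q) ^ m`, each good in `S` yields at most `L` and each other good at most
`μ - L (1 - q) ^ m` (`rev_le`). As `q → 0` with `m` fixed, these two numbers tend to `μ - d / 2`
and `d / 2` (`minimaxVal_le`).
-/

open MeasureTheory Filter Set
open scoped ENNReal

noncomputable section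

/-- The low support point of the two-point law with mean `μ` and mean absolute deviation `d`
that puts mass `q` on its high point. -/
def lowVal (μ d q : ℝ) : ℝ := μ - d / (2 * (1 - q))

/-- The high support point, of mass `q`, of the same two-point law. -/
def highVal (μ d q : ℝ) : ℝ := μ + d / (2 * q)

/-- The measure with mass `1 - q` at `lowVal μ d q` and mass `q` at `highVal μ d q`;
it is a probability measure for `0 ≤ q ≤ 1`. -/
def lawMeasure (μ d q : ℝ) : Measure ℝ :=
  ENNReal.ofReal (1 - q) • Measure.dirac (lowVal μ d q) +
    ENNReal.ofReal q • Measure.dirac (highVal μ d q)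

lemma lawMeasure_isProb (μ d : ℝ) {q : ℝ} (h0 : 0 < q) (h1 : q < 1) :
    IsProbabilityMeasure (lawMeasure μ d q) := by
  refine ⟨?_⟩
  simp only [lawMeasure, Measure.add_apply, Measure.smul_apply, measure_univ, smul_eq_mul, mul_one]
  rw [← ENNReal.ofReal_add (by linarith) h0.le]
  simp

lemma lawMeasure_integrable (μ d q : ℝ) (f : ℝ → ℝ) :
    Integrable f (lawMeasure μ d q) := by
  have h : ∀ a : ℝ, Integrable f (Measure.dirac a) := fun a =>
    integrable_dirac (by simp)
  exact ((h _).smul_measure ENNReal.ofReal_ne_top).add_measure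
    ((h _).smul_measure ENNReal.ofReal_ne_top)

lemma lawMeasure_integral (μ d : ℝ) {q : ℝ} (h0 : 0 < q) (h1 : q < 1) (f : ℝ → ℝ) :
    ∫ x, f x ∂(lawMeasure μ d q) = (1 - q) * f (lowVal μ d q) + q * f (highVal μ d q) := by
  have h : ∀ a : ℝ, Integrable f (Measure.dirac a) := fun a =>
    integrable_dirac (by simp)
  rw [lawMeasure, integral_add_measure ((h _).smul_measure ENNReal.ofReal_ne_top)
    ((h _).smul_measure ENNReal.ofReal_ne_top), integral_smul_measure, integral_smul_measure,
    integral_dirac, integral_dirac, ENNReal.toReal_ofReal (by linarith),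
    ENNReal.toReal_ofReal h0.le]
  simp

lemma lowVal_lt {μ d q : ℝ} (hd0 : 0 < d) (h1 : q < 1) : lowVal μ d q < μ := by
  have : 0 < d / (2 * (1 - q)) := div_pos hd0 (by linarith)
  unfold lowVal; linarith

lemma lt_highVal {μ d q : ℝ} (hd0 : 0 < d) (h0 : 0 < q) : μ < highVal μ d q := by
  have : 0 < d / (2 * q) := by positivity
  unfold highVal; linarith

lemma lawMeasure_singleton_low {μ d q : ℝ} (hd0 : 0 < d) (h0 : 0 < q) (h1 : q < 1) :
    (lawMeasure μ d q).real {lowVal μ d q} = 1 - q := by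
  have hne : highVal μ d q ≠ lowVal μ d q :=
    ((lowVal_lt hd0 h1).trans (lt_highVal hd0 h0)).ne'
  simp [lawMeasure, Measure.real, hne, h1.le]

lemma lawMeasure_Iio {μ d q : ℝ} (hμ : 0 < μ) (hd0 : 0 < d) (h0 : 0 < q)
    (hL : 0 ≤ lowVal μ d q) : (lawMeasure μ d q) (Iio 0) = 0 := by
  have hH : 0 ≤ highVal μ d q := hμ.le.trans (lt_highVal hd0 h0).le
  simp [lawMeasure, hL, hH]

lemma lawMeasure_mem {μ d q : ℝ} (hμ : 0 < μ) (hd0 : 0 < d) (h0 : 0 < q) (h1 : q < 1)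
    (hL : 0 ≤ lowVal μ d q) :
    (⟨lawMeasure μ d q, lawMeasure_isProb μ d h0 h1⟩ : ProbabilityMeasure ℝ) ∈ MeanMAD μ d := by
  have h1' : (1 - q) ≠ 0 := by linarith
  refine ⟨lawMeasure_Iio hμ hd0 h0 hL, lawMeasure_integrable μ d q id, ?_, ?_⟩
  · refine (lawMeasure_integral μ d h0 h1 id).trans ?_
    simp only [id, lowVal, highVal]
    field_simp
    ring
  · refine (lawMeasure_integral μ d h0 h1 fun x => |x - μ|).trans ?_
    rw [abs_of_neg (by linarith [lowVal_lt (μ := μ) hd0 h1]),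
      abs_of_pos (by linarith [lt_highVal (μ := μ) hd0 h0])]
    simp only [lowVal, highVal]
    field_simp
    ring

/-- Compare each type `v` with the type `b = (L, …, L)`. Imitating `b` secures type `v` the goods
sold to `b` for at most `L` each, so `v` pays at most `L` for each of these and at most `v i` for
each other good; the type `b` itself pays nothing for the other goods, which gives the
correction term. -/
lemma price_le {m : ℕ} (D : Mech m) (hD : Truthful D) {L : ℝ} (hL : 0 ≤ L)
    (v : Fin m → ℝ) (hv : ∀ i, 0 ≤ v i) :
    D.price v ≤ ∑ i, (D.alloc (fun _ => L) i * L + (1 - D.alloc (fun _ => L) i) *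
      (v i - L * ({fun _ => L} : Set (Fin m → ℝ)).indicator (fun _ => (1 : ℝ)) v)) := by
  have hb := hD.2 (fun _ => L) (fun _ => hL)
  by_cases h : v = fun _ => L
  · subst h
    simp only [mem_singleton_iff, indicator_of_mem, mul_one, sub_self, mul_zero, add_zero]
    linarith
  · have hic := hD.1 v (fun _ => L) hv (fun _ => hL)
    have hvv : ∑ i, D.alloc v i * v i ≤ ∑ i, v i := by
      refine Finset.sum_le_sum fun i _ => ?_
      rcases D.alloc01 v i with h | h <;> rw [h] <;> linarith [hv i]
    rw [indicator_of_notMem (by simpa using h)]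
    have : ∑ i, (D.alloc (fun _ => L) i * L + (1 - D.alloc (fun _ => L) i) * (v i - L * 0)) =
        ∑ i, D.alloc (fun _ => L) i * L + ∑ i, v i - ∑ i, D.alloc (fun _ => L) i * v i := by
      rw [← Finset.sum_add_distrib, ← Finset.sum_sub_distrib]
      exact Finset.sum_congr rfl fun i _ => by ring
    rw [this]
    linarith

/-- Each good sold to the all-low type contributes at most `L` to the revenue; each other good
contributes at most its expected value off that type, `μ - L (1 - q) ^ m`. -/
lemma rev_le {μ d q : ℝ} (hμ : 0 < μ) (hd0 : 0 < d) (h0 : 0 < q) (h1 : q < 1)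
    (hL : 0 ≤ lowVal μ d q) {m : ℕ} (D : Mech m) (hD : Truthful D) :
    REV D (Measure.pi (fun _ : Fin m => lawMeasure μ d q)) ≤
      m * max (lowVal μ d q) (μ - lowVal μ d q * (1 - q) ^ m) := by
  have hprob := lawMeasure_isProb μ d h0 h1
  set P := lawMeasure μ d q with hP
  set L := lowVal μ d q with hLdef
  set S : Set (Fin m → ℝ) := {fun _ => L} with hS
  set a := D.alloc (fun _ => L) with ha
  have hmp : ∀ i : Fin m, MeasurePreserving (Function.eval i) (Measure.pi fun _ : Fin m => P) P :=
    fun i => measurePreserving_eval (fun _ : Fin m => P) i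
  have hmean : ∫ x, x ∂P = μ := (lawMeasure_mem hμ hd0 h0 h1 hL).2.2.1
  have hint : ∀ i : Fin m, Integrable (fun v : Fin m → ℝ => v i) (Measure.pi fun _ : Fin m => P) :=
    fun i => (hmp i).integrable_comp_of_integrable (lawMeasure_integrable μ d q id)
  have hval : ∀ i : Fin m, ∫ v : Fin m → ℝ, v i ∂(Measure.pi fun _ : Fin m => P) = μ := by
    intro i
    have h := integral_map (μ := Measure.pi fun _ : Fin m => P) (f := fun x : ℝ => x)
      (hmp i).measurable.aemeasurable (by fun_prop)
    rw [(hmp i).map_eq, hmean] at h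
    exact h.symm
  have hSm : MeasurableSet S := measurableSet_singleton _
  have hind : Integrable (S.indicator fun _ => (1 : ℝ)) (Measure.pi fun _ : Fin m => P) :=
    (integrable_const 1).indicator hSm
  have hindval : ∫ v, S.indicator (fun _ => (1 : ℝ)) v ∂(Measure.pi fun _ : Fin m => P)
      = (1 - q) ^ m := by
    rw [integral_indicator_const _ hSm, hS, Measure.real, Measure.pi_singleton]
    simp only [Finset.prod_const, Finset.card_univ, Fintype.card_fin, ENNReal.toReal_pow,
      smul_eq_mul, mul_one]
    rw [← lawMeasure_singleton_low (μ := μ) hd0 h0 h1]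
    rfl
  have hterm : ∀ i : Fin m, Integrable (fun v : Fin m → ℝ => a i * L + (1 - a i) *
      (v i - L * S.indicator (fun _ => (1 : ℝ)) v)) (Measure.pi fun _ : Fin m => P) := fun i =>
    (integrable_const _).add (((hint i).sub (hind.const_mul L)).const_mul _)
  have hnonneg : ∀ᵐ v ∂(Measure.pi fun _ : Fin m => P), ∀ i, 0 ≤ v i := by
    rw [ae_all_iff]
    intro i
    have h : ∀ᵐ x ∂P, 0 ≤ x := by
      rw [ae_iff]
      simpa [Iio] using lawMeasure_Iio hμ hd0 h0 hL
    exact (hmp i).quasiMeasurePreserving.ae h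
  calc REV D (Measure.pi (fun _ : Fin m => P))
      ≤ ∫ v, ∑ i, (a i * L + (1 - a i) * (v i - L * S.indicator (fun _ => (1 : ℝ)) v))
          ∂(Measure.pi fun _ : Fin m => P) := by
        refine integral_mono_of_nonneg (Eventually.of_forall D.price_nonneg)
          (integrable_finsetSum _ fun i _ => hterm i) ?_
        filter_upwards [hnonneg] with v hv
        exact price_le D hD hL v hv
    _ = ∑ i, (a i * L + (1 - a i) * (μ - L * (1 - q) ^ m)) := by
        rw [integral_finsetSum _ fun i _ => hterm i]
        refine Finset.sum_congr rfl fun i _ => ?_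
        have hi : Integrable (fun v : Fin m → ℝ => (1 - a i) *
            (v i - L * S.indicator (fun _ => (1 : ℝ)) v)) (Measure.pi fun _ : Fin m => P) :=
          ((hint i).sub (hind.const_mul L)).const_mul _
        rw [integral_add (integrable_const _) hi, integral_const_mul (1 - a i),
          integral_sub (hint i) (hind.const_mul L), integral_const_mul L, hval, hindval]
        simp
    _ ≤ ∑ _i : Fin m, max L (μ - L * (1 - q) ^ m) := by
        refine Finset.sum_le_sum fun i _ => ?_
        rcases D.alloc01 (fun _ => L) i with h | h <;> rw [ha, h] <;> simp
    _ = m * max L (μ - L * (1 - q) ^ m) := by simp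

lemma minimaxVal_le_of_mass {μ d q : ℝ} (hμ : 0 < μ) (hd0 : 0 < d) (h0 : 0 < q) (h1 : q < 1)
    (hL : 0 ≤ lowVal μ d q) {m : ℕ} (hm : 0 < m) :
    minimaxVal (MeanMAD μ d) m ≤ max (lowVal μ d q) (μ - lowVal μ d q * (1 - q) ^ m) := by
  have hm' : (0 : ℝ) < m := by exact_mod_cast hm
  unfold minimaxVal
  refine le_trans (csInf_le ⟨0, ?_⟩ ⟨fun _ => ⟨lawMeasure μ d q, lawMeasure_isProb μ d h0 h1⟩,
    fun _ => lawMeasure_mem hμ hd0 h0 h1 hL, rfl⟩) ?_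
  · rintro r ⟨P, -, rfl⟩
    refine Real.sSup_nonneg ?_
    rintro s ⟨D, -, rfl⟩
    exact div_nonneg (integral_nonneg D.price_nonneg) hm'.le
  · refine Real.sSup_le ?_ (hL.trans (le_max_left _ _))
    rintro s ⟨D, hD, rfl⟩
    rw [div_le_iff₀' hm']
    exact rev_le hμ hd0 h0 h1 hL D hD

/-- The bound holds for every `m ≥ 1`: for fixed `m`, let the mass `q` of the high value tend
to `0`. -/
lemma minimaxVal_le {μ d : ℝ} (hμ : 0 < μ) (hd0 : 0 < d) (hd : d < 2 * μ) {m : ℕ} (hm : 0 < m) :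
    minimaxVal (MeanMAD μ d) m ≤ max (μ - d / 2) (d / 2) := by
  have hlow : Tendsto (fun q => lowVal μ d q) (nhdsWithin 0 (Ioi 0)) (nhds (μ - d / 2)) := by
    have : ContinuousAt (fun q : ℝ => μ - d / (2 * (1 - q))) 0 := by
      refine continuousAt_const.sub (continuousAt_const.div (by fun_prop) (by norm_num))
    have h := this.tendsto.mono_left (nhdsWithin_le_nhds (s := Ioi 0))
    simpa [lowVal] using h
  have hpow : Tendsto (fun q : ℝ => (1 - q) ^ m) (nhdsWithin 0 (Ioi 0)) (nhds 1) := by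
    have : Continuous (fun q : ℝ => (1 - q) ^ m) := by fun_prop
    have h := (this.tendsto 0).mono_left (nhdsWithin_le_nhds (s := Ioi 0))
    simpa using h
  have hlim := hlow.max ((tendsto_const_nhds (x := μ)).sub (hlow.mul hpow))
  have heq : μ - (μ - d / 2) * 1 = d / 2 := by ring
  rw [heq] at hlim
  refine ge_of_tendsto hlim ?_
  filter_upwards [self_mem_nhdsWithin, nhdsWithin_le_nhds (Iio_mem_nhds one_pos),
    hlow.eventually (lt_mem_nhds (show (0 : ℝ) < μ - d / 2 by linarith))] with q h0 h1 hL
  exact minimaxVal_le_of_mass hμ hd0 h0 h1 hL.le hm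

/-- Theorem 3 (minimax upper bound): no deterministic truthful mechanism can asymptotically
achieve a normalized revenue greater than `max (μ - d/2) (d/2)` in the minimax problem. -/
theorem minimax_upper_bound (μ d : ℝ) (hμ : 0 < μ) (hd0 : 0 < d) (hd : d < 2 * μ) :
    limsup (fun m : ℕ => minimaxVal (MeanMAD μ d) m) atTop ≤ max (μ - d / 2) (d / 2) := by
  refine limsup_le_of_le ?_ ?_
  -- The values are nonnegative, so the real-valued `limsup` is not a junk value.
  · refine IsCoboundedUnder.of_frequently_ge (a := 0) (Frequently.of_forall fun m => ?_)
    refine Real.sInf_nonneg ?_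
    rintro r ⟨P, -, rfl⟩
    refine Real.sSup_nonneg ?_
    rintro s ⟨D, -, rfl⟩
    exact div_nonneg (integral_nonneg D.price_nonneg) (Nat.cast_nonneg m)
  · filter_upwards [eventually_gt_atTop 0] with m hm
    exact minimaxVal_le hμ hd0 hd hm

end
end

section
/- One-sided concentration bound under mean-MAD ambiguity: let μ > 0, 0 < d < 2μ, and 0 < ε < 1 − d/(2μ). Then there exists a constant C = C(μ,d,ε) ≥ 0, independent of m, such that for every m ∈ ℕ and every product measure P^m ∈ P(μ,d)^m, P^m( ∑_{i=1}^m X_i ≥ (1−ε)² m (μ − d/(2(1−ε))) ) ≥ 1 − C/m. -/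
/-!
Truncating every coordinate at the mean turns the problem into Chebyshev's inequality.
Since `min x μ = (x + μ - |x - μ|) / 2`, each `P ∈ MeanMAD μ d` satisfies
`E[min X μ] = μ - d / 2` (`integral_min_of_mem`), and `min X μ` takes values in `[0, μ]`
almost surely, so its variance is at most `μ² / 4`, although `X` itself may have infinite
variance.

The threshold per good, `t = (1 - ε)² (μ - d / (2 (1 - ε))) = (1 - ε) ((1 - ε) μ - d / 2)`,
lies strictly below `μ - d / 2`. With `δ = μ - d / 2 - t > 0`, Chebyshev's inequality for the
sum of the truncated coordinates bounds the probability that it falls below `m t` by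
`(m μ² / 4) / (m δ)²`, which gives `C = μ² / (4 δ²)`. The sum of the `X i` dominates the sum of
the truncations.
-/

open MeasureTheory Filter Set
open scoped ENNReal

noncomputable section

lemma ae_min_mem_Icc {μ d : ℝ} (hμ : 0 < μ) {P : ProbabilityMeasure ℝ} (hP : P ∈ MeanMAD μ d) :
    ∀ᵐ x ∂(P : Measure ℝ), min x μ ∈ Set.Icc 0 μ := by
  have h : ∀ᵐ x ∂(P : Measure ℝ), x ∉ Set.Iio (0 : ℝ) := measure_eq_zero_iff_ae_notMem.1 hP.1
  filter_upwards [h] with x hx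
  exact ⟨le_min (not_lt.1 hx) hμ.le, min_le_right _ _⟩

lemma integral_min_of_mem {μ d : ℝ} {P : ProbabilityMeasure ℝ} (hP : P ∈ MeanMAD μ d) :
    ∫ x, min x μ ∂(P : Measure ℝ) = μ - d / 2 := by
  obtain ⟨-, hint, hmean, hmad⟩ := hP
  have hmin : ∀ x : ℝ, min x μ = (x + μ - |x - μ|) / 2 := fun x => by
    rcases le_total x μ with h | h
    · rw [min_eq_left h, abs_of_nonpos (by linarith)]; ring
    · rw [min_eq_right h, abs_of_nonneg (by linarith)]; ring
  have habs : Integrable (fun x : ℝ => |x - μ|) (P : Measure ℝ) :=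
    (hint.sub (integrable_const μ)).abs
  have hadd : Integrable (fun x : ℝ => x + μ) (P : Measure ℝ) := hint.add (integrable_const μ)
  simp_rw [hmin]
  rw [integral_div, integral_sub hadd habs,
    integral_add hint (integrable_const μ), hmean, hmad]
  simp
  ring

/-- Chebyshev's inequality for the sum of the coordinates truncated at the mean. -/
lemma pi_sum_min_deviation_le {μ d c : ℝ} (hμ : 0 < μ) (hc : 0 < c) {m : ℕ}
    {P : Fin m → ProbabilityMeasure ℝ} (hP : ∀ i, P i ∈ MeanMAD μ d) :
    (jointMeasure P) {v | c ≤ |∑ i, min (v i) μ - m * (μ - d / 2)|} ≤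
      ENNReal.ofReal (m * (μ ^ 2 / 4) / c ^ 2) := by
  have hL2 : ∀ i, MemLp (fun x : ℝ => min x μ) 2 (P i : Measure ℝ) := fun i =>
    memLp_of_bounded (ae_min_mem_Icc hμ (hP i)) (by fun_prop) 2
  have hL2pi : ∀ i, MemLp (fun v : Fin m → ℝ => min (v i) μ) 2
      (Measure.pi fun i => (P i : Measure ℝ)) := fun i =>
    (hL2 i).comp_measurePreserving (measurePreserving_eval (fun i => (P i : Measure ℝ)) i)
  have hmean : ∫ v, (∑ i, fun v : Fin m → ℝ => min (v i) μ) v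
      ∂(Measure.pi fun i => (P i : Measure ℝ)) = m * (μ - d / 2) := by
    simp only [Finset.sum_apply]
    rw [integral_finsetSum _ fun i _ => (hL2pi i).integrable (by norm_num)]
    have : ∀ i, ∫ v : Fin m → ℝ, min (v i) μ ∂(Measure.pi fun i => (P i : Measure ℝ)) =
        μ - d / 2 := fun i => by
      rw [← integral_min_of_mem (hP i)]
      exact integral_comp_eval (μ := fun i => (P i : Measure ℝ))
        (f := fun x : ℝ => min x μ) (by fun_prop)
    simp [this, mul_sub]
  have hvar : ProbabilityTheory.variance (∑ i, fun v : Fin m → ℝ => min (v i) μ)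
      (Measure.pi fun i => (P i : Measure ℝ)) ≤ m * (μ ^ 2 / 4) := by
    rw [ProbabilityTheory.variance_sum_pi (X := fun _ x => min x μ) hL2]
    calc _ ≤ ∑ _i : Fin m, μ ^ 2 / 4 := Finset.sum_le_sum fun i _ =>
          (ProbabilityTheory.variance_le_sq_of_bounded (ae_min_mem_Icc hμ (hP i))
            (by fun_prop)).trans_eq (by ring)
      _ = _ := by simp
  have hcheb := ProbabilityTheory.meas_ge_le_variance_div_sq
    (memLp_finsetSum' Finset.univ fun i _ => hL2pi i) hc
  rw [hmean] at hcheb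
  simp only [Finset.sum_apply] at hcheb
  exact hcheb.trans (ENNReal.ofReal_le_ofReal (by gcongr))

/-- Proposition 1 (one-sided concentration bound): under mean-MAD ambiguity, there is a
constant `C = C(μ,d,ε)`, independent of `m`, such that the sum of `m` independent valuations
is at least `(1-ε)² m (μ - d/(2(1-ε)))` with probability at least `1 - C/m`. -/
theorem one_sided_concentration (μ d ε : ℝ) (hμ : 0 < μ) (hd0 : 0 < d) (hd : d < 2 * μ)
    (hε0 : 0 < ε) (hε : ε < 1 - d / (2 * μ)) :
    ∃ C : ℝ, 0 ≤ C ∧ ∀ (m : ℕ) (P : Fin m → ProbabilityMeasure ℝ),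
      (∀ i, P i ∈ MeanMAD μ d) →
      1 - C / m ≤
        ((jointMeasure P)
          {v | (1 - ε) ^ 2 * m * (μ - d / (2 * (1 - ε))) ≤ ∑ i, v i}).toReal := by
  have hε1 : 0 < 1 - ε := by
    have : 0 < d / (2 * μ) := by positivity
    linarith
  set t := (1 - ε) ^ 2 * (μ - d / (2 * (1 - ε))) with ht
  have ht' : t = (1 - ε) * ((1 - ε) * μ - d / 2) := by
    rw [ht]; field_simp
  have hpos : 0 < (1 - ε) * μ - d / 2 := by
    have h : d / (2 * μ) < 1 - ε := by linarith
    rw [div_lt_iff₀ (by positivity)] at h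
    linarith
  have hδ : 0 < μ - d / 2 - t := by
    rw [ht']
    nlinarith [mul_pos hε0 hpos, mul_pos hε0 hμ]
  refine ⟨μ ^ 2 / (4 * (μ - d / 2 - t) ^ 2), by positivity, fun m P hP => ?_⟩
  have : IsProbabilityMeasure (jointMeasure P) := by
    unfold jointMeasure; infer_instance
  rcases Nat.eq_zero_or_pos m with rfl | hm
  · simp
  have hm' : (0 : ℝ) < m := by exact_mod_cast hm
  have hmeas : MeasurableSet
      {v : Fin m → ℝ | (1 - ε) ^ 2 * m * (μ - d / (2 * (1 - ε))) ≤ ∑ i, v i} :=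
    measurableSet_le measurable_const (by fun_prop)
  have hsub : {v : Fin m → ℝ | (1 - ε) ^ 2 * m * (μ - d / (2 * (1 - ε))) ≤ ∑ i, v i}ᶜ ⊆
      {v | m * (μ - d / 2 - t) ≤ |∑ i, min (v i) μ - m * (μ - d / 2)|} := by
    intro v hv
    simp only [Set.mem_compl_iff, Set.mem_ofPred_eq, not_le] at hv ⊢
    have h1 : ∑ i, min (v i) μ ≤ ∑ i, v i := Finset.sum_le_sum fun i _ => min_le_left _ _
    have h2 : (1 - ε) ^ 2 * m * (μ - d / (2 * (1 - ε))) = m * t := by rw [ht]; ring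
    rw [abs_sub_comm]
    refine le_trans ?_ (le_abs_self _)
    linarith
  have hbad := (measure_mono hsub).trans
    (pi_sum_min_deviation_le hμ (mul_pos hm' hδ) hP)
  have hreal := ENNReal.toReal_le_of_le_ofReal (by positivity) hbad
  have hcompl := prob_compl_eq_one_sub (μ := jointMeasure P) hmeas
  rw [hcompl, ENNReal.toReal_sub_of_le prob_le_one ENNReal.one_ne_top,
    ENNReal.toReal_one] at hreal
  have hC : m * (μ ^ 2 / 4) / (m * (μ - d / 2 - t)) ^ 2 =
      μ ^ 2 / (4 * (μ - d / 2 - t) ^ 2) / m := by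
    field_simp
  rw [hC] at hreal
  linarith

end
end
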